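/- Main theorem: For all 4 ≤ t ≤ r, the Graver complexity of the incidence matrix A_{t,r} of the complete bipartite graph K_{t,r} satisfies g(A_{t,r}) ≥ (t−1)^{r−t}·(b_t + 1/(t−2)) − 1/(t−2), where b_t = (t−2)!·(15 + Σ_{i=1}^{t−4} (i+4)/(i+2)!). -/

import Mathlib

/-- `u ⊑ v` iff `|u i| ≤ |v i|` and `u i * v i ≥ 0` for all `i`. -/
def sqle {ι : Type*} (u v : ι → ℤ) : Prop := ∀ i, |u i| ≤ |v i| ∧ 0 ≤ u i * v i

/-- Membership in the Graver basis of `A`: a `⊑`-minimal nonzero element of `ker_ℤ(A)`. -/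
def inGraver {R C : Type*} [Fintype C] (A : Matrix R C ℤ) (x : C → ℤ) : Prop :=
  A.mulVec x = 0 ∧ x ≠ 0 ∧
    ∀ y : C → ℤ, A.mulVec y = 0 → y ≠ 0 → sqle y x → y = x

/-- The `h`-th Lawrence lifting of `A`. -/
def lawrence {R C : Type*} [DecidableEq C] (A : Matrix R C ℤ) (h : ℕ) :
    Matrix ((Fin h × R) ⊕ C) (Fin h × C) ℤ :=
  fun row col =>
    match row with
    | Sum.inl (i, a) => if i = col.1 then A a col.2 else 0
    | Sum.inr b => if b = col.2 then 1 else 0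

/-- The type of `x ∈ ℤ^{h·C}`: the number of nonzero blocks. -/
noncomputable def typeOf {C : Type*} {h : ℕ} (x : Fin h × C → ℤ) : ℕ :=
  Nat.card {i : Fin h // ∃ b, x (i, b) ≠ 0}

/-- The Graver complexity `g(A)`. -/
noncomputable def graverComplexity {R C : Type*} [Fintype C] [DecidableEq C]
    (A : Matrix R C ℤ) : ℕ∞ :=
  sSup (insert 0 {m : ℕ∞ | ∃ h : ℕ, 1 ≤ h ∧
    ∃ x : Fin h × C → ℤ, inGraver (lawrence A h) x ∧ (typeOf x : ℕ∞) = m})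

/-- The incidence matrix `A_{t,r}` of the complete bipartite graph `K_{t,r}`:
rows indexed by vertices, columns by edges. -/
def incidence (t r : ℕ) : Matrix (Fin t ⊕ Fin r) (Fin t × Fin r) ℤ :=
  fun row e =>
    match row with
    | Sum.inl a => if a = e.1 then 1 else 0
    | Sum.inr b => if b = e.2 then 1 else 0

/-- `b_t = (t−2)!·(15 + Σ_{i=1}^{t−4} (i+4)/(i+2)!)`. -/
def bConst (t : ℕ) : ℚ :=
  (Nat.factorial (t - 2) : ℚ) *
    (15 + ∑ i ∈ Finset.Icc 1 (t - 4), ((i : ℚ) + 4) / (Nat.factorial (i + 2) : ℚ))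

/-!
Suppose a Graver element `v` is a combination `∑ w i • c i` of linearly independent Graver
elements with coefficients `w i ∈ ℕ`. The multiset consisting of `-v` and of `w i` copies of each
`c i` sums to zero and, by independence, has no proper nonempty subfamily summing to zero.
Stacking its members as blocks gives a Graver element of a Lawrence lifting, of type `1 + ∑ w i`.

For `K_{t,r}` take `v` to be a cycle with `k` vertices on each side. Replacing one of its column
vertices by a fresh one, in each of the `k` possible ways, yields `k` cycles whose sum is
`(k - 1) v`, because every edge survives in `k - 1` of them and the edges at the fresh vertex
telescope. Hence one of these cycles is `(k - 1) v` minus the `k - 1` others, which are independent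
of each other and of everything in the old graph: a representation of `v` of weight `M` becomes one
of weight `(k - 1) M + (k - 1)` in `K_{t,r+1}`. A fresh row vertex works the same way; there one
also adds a 4-cycle that re-inserts the replaced vertex, so that the cycle grows with the number of
rows. Starting from a 6-cycle of weight `7` in `K_{3,3}`, these steps alternate up to `K_{t,t}`,
and columns alone are added from there on.
-/

open Finset Function
open scoped Matrix

section GraverBasis

variable {R C R' C' : Type*} [Fintype C] [Fintype C'] {A : Matrix R C ℤ} {A' : Matrix R' C' ℤ}

lemma inGraver.neg {x : C → ℤ} (hx : inGraver A x) : inGraver A (-x) := by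
  refine ⟨by rw [Matrix.mulVec_neg, hx.1, neg_zero], neg_ne_zero.2 hx.2.1, fun y hy hy0 hyx => ?_⟩
  have hneg : -y = x := hx.2.2 (-y) (by rw [Matrix.mulVec_neg, hy, neg_zero]) (neg_ne_zero.2 hy0)
    fun i => by simpa using hyx i
  rw [← hneg, neg_neg]

lemma inGraver_of_forall_eq_smul {x : C → ℤ} {e : C} (hx : A *ᵥ x = 0) (he : x e = 1)
    (hmin : ∀ y : C → ℤ, A *ᵥ y = 0 → (∀ i, x i = 0 → y i = 0) → y = y e • x) :
    inGraver A x := by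
  refine ⟨hx, fun h => by simp [h] at he, fun y hy hy0 hyx => ?_⟩
  have hsmul : y = y e • x := hmin y hy fun i hi => by simpa [hi] using (hyx i).1
  have hye0 : y e ≠ 0 := fun h => hy0 (by rw [hsmul, h, zero_smul])
  obtain ⟨hle, hnonneg⟩ : |y e| ≤ 1 ∧ 0 ≤ y e := by simpa [he] using hyx e
  have hye : y e = 1 := by have := abs_le.1 hle; lia
  rw [hsmul, hye, one_smul]

lemma inGraver.extend_zero {φ : C → C'} (hφ : Injective φ)
    (hker : ∀ x : C → ℤ, A' *ᵥ extend φ x 0 = 0 ↔ A *ᵥ x = 0) {x : C → ℤ}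
    (hx : inGraver A x) : inGraver A' (extend φ x 0) := by
  refine ⟨(hker x).2 hx.1, fun h => hx.2.1 ?_, fun y hy hy0 hyx => ?_⟩
  · rw [← extend_comp hφ x 0, h, Pi.zero_comp]
  · have hy_eq : extend φ (y ∘ φ) 0 = y := by
      funext e
      by_cases he : ∃ i, φ i = e
      · obtain ⟨i, rfl⟩ := he
        rw [hφ.extend_apply, comp_apply]
      · have := (hyx e).1
        rw [extend_apply' _ _ _ he] at this ⊢
        simpa [eq_comm] using this
    have hcomp : y ∘ φ = x := by
      refine hx.2.2 _ ((hker _).1 (hy_eq.symm ▸ hy)) (fun h => hy0 ?_) fun i => ?_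
      · rw [← hy_eq, h]
        exact (ExtendByZero.linearMap ℤ φ).map_zero
      · simpa [hφ.extend_apply] using hyx (φ i)
    rw [← hcomp, hy_eq]

end GraverBasis

section Lawrence

lemma typeOf_uncurry {C : Type*} {h : ℕ} {x : Fin h → C → ℤ} (hx : ∀ k, x k ≠ 0) :
    typeOf (uncurry x) = h := by
  have hall (k : Fin h) : ∃ c, uncurry x (k, c) ≠ 0 := ne_iff.1 (hx k)
  rw [typeOf, Nat.card_congr (Equiv.subtypeUnivEquiv hall), Nat.card_fin]

variable {R C : Type*} [Fintype C] [DecidableEq C] {A : Matrix R C ℤ} {h : ℕ}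

lemma lawrence_mulVec_uncurry_eq_zero_iff {x : Fin h → C → ℤ} :
    lawrence A h *ᵥ uncurry x = 0 ↔ (∀ k, A *ᵥ x k = 0) ∧ ∑ k, x k = 0 := by
  have hblock (k : Fin h) (i : R) :
      (lawrence A h *ᵥ uncurry x) (Sum.inl (k, i)) = (A *ᵥ x k) i := by
    rw [Matrix.mulVec, dotProduct, Fintype.sum_prod_type, Fintype.sum_eq_single k]
    · simp [lawrence, Matrix.mulVec, dotProduct]
    · exact fun l hl => by simp [lawrence, hl.symm]
  have hsum (c : C) : (lawrence A h *ᵥ uncurry x) (Sum.inr c) = (∑ k, x k) c := by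
    simp [Matrix.mulVec, dotProduct, lawrence, Fintype.sum_prod_type]
  simp only [funext_iff, Sum.forall, Prod.forall, hblock, hsum, Pi.zero_apply]

lemma inGraver_lawrence_uncurry [NeZero h] {x : Fin h → C → ℤ} (hx : ∀ k, inGraver A (x k))
    (hsum : ∑ k, x k = 0) (hmin : ∀ s : Finset (Fin h), ∑ k ∈ s, x k = 0 → s = ∅ ∨ s = univ) :
    inGraver (lawrence A h) (uncurry x) := by
  refine ⟨lawrence_mulVec_uncurry_eq_zero_iff.2 ⟨fun k => (hx k).1, hsum⟩,
    fun h0 => (hx 0).2.1 (congrArg (curry · 0) h0), fun z hz hz0 hzx => ?_⟩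
  obtain ⟨y, rfl⟩ : ∃ y, z = uncurry y := ⟨curry z, (uncurry_curry z).symm⟩
  obtain ⟨hy, hysum⟩ := lawrence_mulVec_uncurry_eq_zero_iff.1 hz
  have hblock (k : Fin h) (hk : y k ≠ 0) : y k = x k :=
    (hx k).2.2 (y k) (hy k) hk fun c => hzx (k, c)
  have hsub : ∑ k with y k ≠ 0, x k = 0 := calc
    ∑ k with y k ≠ 0, x k = ∑ k with y k ≠ 0, y k :=
      sum_congr rfl fun k hk => (hblock k (mem_filter.1 hk).2).symm
    _ = 0 := by rw [sum_filter_ne_zero, hysum]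
  rcases hmin _ hsub with hempty | huniv
  · refine absurd ?_ hz0
    funext ⟨k, c⟩
    exact congrFun (not_not.1 (filter_eq_empty_iff.1 hempty (mem_univ k))) c
  · rw [funext fun k => hblock k (filter_eq_self.1 huniv k (mem_univ k))]

lemma card_le_graverComplexity {ι : Type*} [Fintype ι] {x : ι → C → ℤ}
    (hx : ∀ i, inGraver A (x i)) (hsum : ∑ i, x i = 0)
    (hmin : ∀ s : Finset ι, ∑ i ∈ s, x i = 0 → s = ∅ ∨ s = univ) :
    (Fintype.card ι : ℕ∞) ≤ graverComplexity A := by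
  rcases isEmpty_or_nonempty ι with _ | _
  · simp
  have : NeZero (Fintype.card ι) := ⟨Fintype.card_ne_zero⟩
  let e := (Fintype.equivFin ι).symm
  have hgraver : inGraver (lawrence A (Fintype.card ι)) (uncurry (x ∘ e)) := by
    refine inGraver_lawrence_uncurry (fun k => hx (e k)) ?_ fun s hs => ?_
    · rw [← hsum, ← e.sum_comp]; rfl
    · have := hmin (s.map e.toEmbedding) (by rw [sum_map]; exact hs)
      rwa [map_eq_empty, ← map_univ_equiv e, map_inj] at this
  exact le_sSup (.inr ⟨_, Fintype.card_pos, _, hgraver,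
    congrArg _ (typeOf_uncurry fun k => (hx (e k)).2.1)⟩)

end Lawrence

lemma linearIndependent_of_triangular {ι X K : Type*} [Finite ι] [LinearOrder ι] [Ring K]
    [NoZeroDivisors K] {v : ι → X → K} (p : ι → X) (hdiag : ∀ i, v i (p i) ≠ 0)
    (htri : ∀ i j, i < j → v j (p i) = 0) : LinearIndependent K v := by
  cases nonempty_fintype ι
  rw [Fintype.linearIndependent_iff]
  intro g hg i
  induction i using WellFoundedLT.induction with
  | ind i ih =>
    have heval : ∑ j, g j * v j (p i) = 0 := by simpa using congrFun hg (p i)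
    rw [Fintype.sum_eq_single i fun j hj => ?_] at heval
    · exact (mul_eq_zero.1 heval).resolve_right (hdiag i)
    · rcases hj.lt_or_gt with hlt | hgt
      · rw [ih j hlt, zero_mul]
      · rw [htri i j hgt, mul_zero]

section GraverRepresentation

variable {R C R' C' : Type*} [Fintype C] [Fintype C'] {A : Matrix R C ℤ} {A' : Matrix R' C' ℤ}
  {v : C → ℤ} {M : ℕ}

/-- `v` is a nonnegative integer combination, with coefficients summing to `M`, of linearly
independent elements of the Graver basis of `A`. -/
def HasGraverRep (A : Matrix R C ℤ) (v : C → ℤ) (M : ℕ) : Prop :=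
  ∃ (ι : Type) (_ : Fintype ι) (c : ι → C → ℤ) (w : ι → ℕ),
    (∀ i, inGraver A (c i)) ∧ LinearIndependent ℤ c ∧ ∑ i, w i • c i = v ∧ ∑ i, w i = M

/-- The relation `v = ∑ w i • c i` written as a family with sum zero: one copy of `-v`, indexed by
`none`, and `w i` copies of each `c i`. -/
def relationBlocks {ι V : Type*} [Fintype ι] [AddCommGroup V] (c : ι → V) (w : ι → ℕ) :
    Option (Σ i, Fin (w i)) → V :=
  fun o => o.elim (-∑ i, w i • c i) fun p => c p.1

section RelationBlocks

variable {ι V : Type*} [Fintype ι] [AddCommGroup V]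

lemma sum_relationBlocks [DecidableEq ι] (c : ι → V) (w : ι → ℕ)
    (s : Finset (Option (Σ i, Fin (w i)))) :
    ∑ o ∈ s, relationBlocks c w o =
      ∑ i, ((#{k | some ⟨i, k⟩ ∈ s} : ℤ) - if none ∈ s then (w i : ℤ) else 0) • c i := by
  have hite : ∑ o ∈ s, relationBlocks c w o = ∑ o, if o ∈ s then relationBlocks c w o else 0 := by
    rw [sum_ite_mem, univ_inter]
  rw [hite, Fintype.sum_option, Fintype.sum_sigma]
  by_cases hnone : none ∈ s
  · simp [relationBlocks, hnone, ← sum_filter, sub_smul, neg_add_eq_sub]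
  · simp [relationBlocks, hnone, ← sum_filter]

lemma eq_empty_or_eq_univ_of_sum_relationBlocks_eq_zero {c : ι → V} (hc : LinearIndependent ℤ c)
    {w : ι → ℕ} {s : Finset (Option (Σ i, Fin (w i)))} (hs : ∑ o ∈ s, relationBlocks c w o = 0) :
    s = ∅ ∨ s = univ := by
  classical
  have hcount := Fintype.linearIndependent_iff.1 hc _ ((sum_relationBlocks c w s).symm.trans hs)
  simp only [sub_eq_zero] at hcount
  by_cases hnone : none ∈ s
  · right
    have hsome (i : ι) (k : Fin (w i)) : some ⟨i, k⟩ ∈ s := by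
      have hcard : #{k | some ⟨i, k⟩ ∈ s} = #(univ : Finset (Fin (w i))) := by
        simpa [hnone] using hcount i
      exact card_filter_eq_iff.1 hcard k (mem_univ k)
    rw [eq_univ_iff_forall]
    rintro (_ | ⟨i, k⟩)
    exacts [hnone, hsome i k]
  · left
    have hsome (i : ι) (k : Fin (w i)) : some ⟨i, k⟩ ∉ s := by
      have hcard : #{k | some ⟨i, k⟩ ∈ s} = 0 := by simpa [hnone] using hcount i
      exact card_filter_eq_zero_iff.1 hcard k (mem_univ k)
    rw [eq_empty_iff_forall_notMem]
    rintro (_ | ⟨i, k⟩)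
    exacts [hnone, hsome i k]

end RelationBlocks

theorem HasGraverRep.succ_le_graverComplexity [DecidableEq C] (h : HasGraverRep A v M)
    (hv : inGraver A v) : ((M + 1 : ℕ) : ℕ∞) ≤ graverComplexity A := by
  obtain ⟨ι, _, c, w, hc, hli, rfl, rfl⟩ := h
  have hcard : Fintype.card (Option (Σ i, Fin (w i))) = ∑ i, w i + 1 := by simp
  rw [← hcard]
  refine card_le_graverComplexity (x := relationBlocks c w) ?_ ?_
    fun s hs => eq_empty_or_eq_univ_of_sum_relationBlocks_eq_zero hli hs
  · rintro (_ | p)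
    exacts [hv.neg, hc p.1]
  · simp [relationBlocks, Fintype.sum_sigma]

theorem HasGraverRep.extend_zero_add {κ : Type} [Fintype κ] {φ : C → C'} (hφ : Injective φ)
    (hker : ∀ x : C → ℤ, A' *ᵥ extend φ x 0 = 0 ↔ A *ᵥ x = 0) (h : HasGraverRep A v M) (k : ℕ)
    {d : κ → C' → ℤ} (hd : ∀ j, inGraver A' (d j)) {S : Type*} {ψ : S → C'}
    (hψ : ∀ s, ψ s ∉ Set.range φ) (hli : LinearIndependent ℤ fun j => d j ∘ ψ) :
    HasGraverRep A' (k • extend φ v 0 + ∑ j, d j) (k * M + Fintype.card κ) := by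
  obtain ⟨ι, _, c, w, hc, hc_li, rfl, rfl⟩ := h
  let E := ExtendByZero.linearMap ℤ φ
  let π := LinearMap.funLeft ℤ ℤ ψ
  have hπE (x : C → ℤ) : π (E x) = 0 := funext fun s => extend_apply' _ _ _ (hψ s)
  have hE : LinearIndependent ℤ (E ∘ c) :=
    hc_li.map' E (LinearMap.ker_eq_bot.2 (extend_injective hφ _))
  refine ⟨ι ⊕ κ, inferInstance, Sum.elim (E ∘ c) d, Sum.elim (fun i => k * w i) 1, ?_, ?_, ?_, ?_⟩
  · rintro (i | j)
    exacts [(hc i).extend_zero hφ hker, hd j]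
  · refine hE.sum_type (hli.of_comp π) <|
      (Submodule.range_ker_disjoint (f := π) hli).symm.mono_left ?_
    rw [Submodule.span_le]
    rintro _ ⟨i, rfl⟩
    exact hπE (c i)
  · change _ = k • E (∑ i, w i • c i) + _
    simp only [Fintype.sum_sum_type, Sum.elim_inl, Sum.elim_inr, comp_apply, mul_smul, map_sum,
      map_nsmul, smul_sum, Pi.one_apply, one_smul]
  · simp [Fintype.sum_sum_type, mul_sum]

end GraverRepresentation

section AlternatingCycle

lemma sum_sub_add_one {V : Type*} [AddCommGroup V] {n : ℕ} (f : Fin (n + 1) → V) :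
    ∑ l, (f l - f (l + 1)) = 0 := by
  rw [sum_sub_distrib, sub_eq_zero]
  exact (Equiv.sum_comp (Equiv.addRight 1) f).symm

lemma sum_sum_update {X V : Type*} [AddCommMonoid V] {n : ℕ} (G : Fin (n + 1) → X → V)
    (f : Fin (n + 1) → X) (x : X) :
    ∑ m, ∑ l, G l (update f m x l) = n • ∑ l, G l (f l) + ∑ l, G l x := by
  have hinner (l : Fin (n + 1)) : ∑ m, G l (update f m x l) = n • G l (f l) + G l x := by
    simp [Fin.sum_univ_succAbove _ l, Fin.ne_succAbove, add_comm]
  rw [sum_comm, sum_congr rfl fun l _ => hinner l, sum_add_distrib, smul_sum]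

variable {α β : Type*} [DecidableEq α] [DecidableEq β] {n : ℕ}

/-- The vector on the edges of a complete bipartite graph that alternates between `1` and `-1`
along the closed walk `a 0, b 0, a 1, b 1, …, a n, b n, a 0`; the indices are read cyclically. -/
def alternatingCycle (a : Fin (n + 1) → α) (b : Fin (n + 1) → β) : α × β → ℤ :=
  ∑ l, (Pi.single (a l, b l) 1 - Pi.single (a (l + 1), b l) 1)

lemma alternatingCycle_eq_sum_sub_one (a : Fin (n + 1) → α) (b : Fin (n + 1) → β) :
    alternatingCycle a b = ∑ l, (Pi.single (a l, b l) 1 - Pi.single (a l, b (l - 1)) 1) := by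
  rw [alternatingCycle, sum_sub_distrib, sum_sub_distrib, sub_right_inj,
    ← (Equiv.subRight (1 : Fin (n + 1))).sum_comp]
  simp

lemma sum_alternatingCycle_update_right (a : Fin (n + 1) → α) (b : Fin (n + 1) → β) (y : β) :
    ∑ m, alternatingCycle a (update b m y) = n • alternatingCycle a b := by
  let G (l : Fin (n + 1)) (z : β) : α × β → ℤ := Pi.single (a l, z) 1 - Pi.single (a (l + 1), z) 1
  have htele : ∑ l, G l y = 0 := sum_sub_add_one fun l => Pi.single (a l, y) 1
  refine (sum_sum_update G b y).trans ?_
  rw [htele, add_zero]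
  rfl

lemma sum_alternatingCycle_update_left (a : Fin (n + 1) → α) (b : Fin (n + 1) → β) (x : α) :
    ∑ m, alternatingCycle (update a m x) b = n • alternatingCycle a b := by
  let G (l : Fin (n + 1)) (z : α) : α × β → ℤ := Pi.single (z, b l) 1 - Pi.single (z, b (l - 1)) 1
  have htele : ∑ l, G l x = 0 := by
    rw [← sum_sub_add_one fun l => -(Pi.single (x, b (l - 1)) 1 : α × β → ℤ)]
    simp [G, neg_add_eq_sub]
  simp only [alternatingCycle_eq_sum_sub_one]
  refine (sum_sum_update G a x).trans ?_
  rw [htele, add_zero]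

lemma alternatingCycle_apply_snd (a : Fin (n + 1) → α) {b : Fin (n + 1) → β} (hb : Injective b)
    (x : α) (l : Fin (n + 1)) :
    alternatingCycle a b (x, b l) =
      (Pi.single (a l) 1 : α → ℤ) x - (Pi.single (a (l + 1)) 1 : α → ℤ) x := by
  rw [alternatingCycle, Finset.sum_apply, Fintype.sum_eq_single l]
  · simp [Pi.single_apply]
  · intro m hm
    simp [hb.eq_iff, hm.symm]

lemma alternatingCycle_apply_fst {a : Fin (n + 1) → α} (ha : Injective a) (b : Fin (n + 1) → β)
    (l : Fin (n + 1)) (y : β) :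
    alternatingCycle a b (a (l + 1), y) =
      (Pi.single (b (l + 1)) 1 : β → ℤ) y - (Pi.single (b l) 1 : β → ℤ) y := by
  rw [alternatingCycle_eq_sum_sub_one, Finset.sum_apply, Fintype.sum_eq_single (l + 1)]
  · simp [Pi.single_apply]
  · intro m hm
    simp [ha.eq_iff, hm.symm]

lemma alternatingCycle_apply_of_notMem_range (a : Fin (n + 1) → α) {b : Fin (n + 1) → β} (x : α)
    {y : β} (hy : y ∉ Set.range b) : alternatingCycle a b (x, y) = 0 := by
  have hne (l : Fin (n + 1)) : y ≠ b l := fun h => hy ⟨l, h.symm⟩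
  simp [alternatingCycle, hne]

lemma alternatingCycle_snoc (a : Fin (n + 1) → α) (b : Fin (n + 1) → β) (x : α) (y : β) :
    alternatingCycle (Fin.snoc a x : Fin (n + 2) → α) (Fin.snoc b y : Fin (n + 2) → β) =
      alternatingCycle a b + alternatingCycle ![a 0, x] ![b (Fin.last n), y] := by
  have hsnoc (i : Fin n) : (Fin.snoc a x : Fin (n + 2) → α) i.castSucc.succ = a i.succ := by
    rw [Fin.succ_castSucc, Fin.snoc_castSucc]
  have h0 : (Fin.snoc a x : Fin (n + 2) → α) 0 = a 0 := Fin.snoc_apply_zero _ _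
  simp only [alternatingCycle, sum_sub_distrib]
  simp [Fin.sum_univ_castSucc, hsnoc, h0]
  abel

end AlternatingCycle

section Incidence

lemma extendByZero_single {ι κ K : Type*} [DecidableEq ι] [DecidableEq κ] [Semiring K]
    {φ : ι → κ} (hφ : Injective φ) (i : ι) (m : K) :
    ExtendByZero.linearMap K φ (Pi.single i m) = Pi.single (φ i) m := by
  funext k
  rw [ExtendByZero.linearMap_apply]
  by_cases hk : ∃ j, φ j = k
  · obtain ⟨j, rfl⟩ := hk
    simp [hφ.extend_apply, Pi.single_apply, hφ.eq_iff]
  · rw [extend_apply' _ _ _ hk, Pi.single_eq_of_ne fun h => hk ⟨i, h.symm⟩, Pi.zero_apply]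

variable {t r t' r' n : ℕ}

lemma incidence_mulVec_inl (y : Fin t × Fin r → ℤ) (i : Fin t) :
    (incidence t r *ᵥ y) (Sum.inl i) = ∑ j, y (i, j) := by
  simp [Matrix.mulVec, dotProduct, incidence, Fintype.sum_prod_type_right]

lemma incidence_mulVec_inr (y : Fin t × Fin r → ℤ) (j : Fin r) :
    (incidence t r *ᵥ y) (Sum.inr j) = ∑ i, y (i, j) := by
  simp [Matrix.mulVec, dotProduct, incidence, Fintype.sum_prod_type]

lemma incidence_col (e : Fin t × Fin r) :
    (incidence t r).col e = Pi.single (Sum.inl e.1) 1 + Pi.single (Sum.inr e.2) 1 := by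
  ext (i | j) <;> simp [incidence, Pi.single_apply]

lemma incidence_mulVec_alternatingCycle (a : Fin (n + 1) → Fin t) (b : Fin (n + 1) → Fin r) :
    incidence t r *ᵥ alternatingCycle a b = 0 := by
  rw [alternatingCycle, Matrix.mulVec_sum, ← sum_sub_add_one fun l => Pi.single (Sum.inl (a l)) 1]
  simp [Matrix.mulVec_sub, incidence_col]

lemma incidence_mulVec_extend_zero {f : Fin t → Fin t'} {g : Fin r → Fin r'} (hf : Injective f)
    (hg : Injective g) (x : Fin t × Fin r → ℤ) :
    incidence t' r' *ᵥ extend (Prod.map f g) x 0 =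
      extend (Sum.map f g) (incidence t r *ᵥ x) 0 := by
  suffices (incidence t' r').mulVecLin ∘ₗ ExtendByZero.linearMap ℤ (Prod.map f g) =
      ExtendByZero.linearMap ℤ (Sum.map f g) ∘ₗ (incidence t r).mulVecLin from
    LinearMap.congr_fun this x
  refine LinearMap.pi_ext' fun e => LinearMap.ext_ring ?_
  simp [extendByZero_single (hf.prodMap hg), extendByZero_single (hf.sumMap hg),
    incidence_col]

lemma incidence_mulVec_extend_zero_eq_zero_iff {f : Fin t → Fin t'} {g : Fin r → Fin r'}
    (hf : Injective f) (hg : Injective g) (x : Fin t × Fin r → ℤ) :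
    incidence t' r' *ᵥ extend (Prod.map f g) x 0 = 0 ↔ incidence t r *ᵥ x = 0 := by
  rw [incidence_mulVec_extend_zero hf hg]
  exact map_eq_zero_iff (ExtendByZero.linearMap ℤ (Sum.map f g))
    (extend_injective (hf.sumMap hg) _)

lemma extend_zero_alternatingCycle {f : Fin t → Fin t'} {g : Fin r → Fin r'} (hf : Injective f)
    (hg : Injective g) (a : Fin (n + 1) → Fin t) (b : Fin (n + 1) → Fin r) :
    extend (Prod.map f g) (alternatingCycle a b) 0 = alternatingCycle (f ∘ a) (g ∘ b) := by
  change ExtendByZero.linearMap ℤ (Prod.map f g) _ = _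
  simp [alternatingCycle, extendByZero_single (hf.prodMap hg)]

lemma cycle_edges_add_eq_zero {a : Fin (n + 2) → Fin t} {b : Fin (n + 2) → Fin r}
    (ha : Injective a) (hb : Injective b) {y : Fin t × Fin r → ℤ} (hy : incidence t r *ᵥ y = 0)
    (hsupp : ∀ e, alternatingCycle a b e = 0 → y e = 0) (l : Fin (n + 2)) :
    y (a l, b l) + y (a (l + 1), b l) = 0 ∧
      y (a (l + 1), b l) + y (a (l + 1), b (l + 1)) = 0 := by
  have hne : l ≠ l + 1 := by simp
  constructor
  · refine .trans ?_ (congrFun hy (Sum.inr (b l)))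
    rw [incidence_mulVec_inr, Fintype.sum_eq_add (a l) (a (l + 1)) (ha.ne hne)]
    rintro i ⟨hi, hi'⟩
    apply hsupp
    rw [alternatingCycle_apply_snd a hb, Pi.single_eq_of_ne hi, Pi.single_eq_of_ne hi', sub_zero]
  · refine .trans ?_ (congrFun hy (Sum.inl (a (l + 1))))
    rw [incidence_mulVec_inl, Fintype.sum_eq_add (b l) (b (l + 1)) (hb.ne hne)]
    rintro j ⟨hj, hj'⟩
    apply hsupp
    rw [alternatingCycle_apply_fst ha, Pi.single_eq_of_ne hj, Pi.single_eq_of_ne hj', sub_zero]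

lemma eq_smul_alternatingCycle {a : Fin (n + 2) → Fin t} {b : Fin (n + 2) → Fin r}
    (ha : Injective a) (hb : Injective b) {y : Fin t × Fin r → ℤ} (hy : incidence t r *ᵥ y = 0)
    (hsupp : ∀ e, alternatingCycle a b e = 0 → y e = 0) :
    y = y (a 0, b 0) • alternatingCycle a b := by
  have hedges := cycle_edges_add_eq_zero ha hb hy hsupp
  have hconst (l : Fin (n + 2)) : y (a l, b l) = y (a 0, b 0) := by
    induction l using Fin.induction with
    | zero => rfl
    | succ l ih =>
      rw [← ih, ← Fin.coeSucc_eq_succ]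
      linarith [(hedges l.castSucc).1, (hedges l.castSucc).2]
  funext ⟨i, j⟩
  by_cases hj : j ∈ Set.range b
  · obtain ⟨l, rfl⟩ := hj
    have hcycle := alternatingCycle_apply_snd a hb i l
    rcases eq_or_ne i (a l) with rfl | hi
    · simp [hcycle, hconst, ha.eq_iff]
    rcases eq_or_ne i (a (l + 1)) with rfl | hi'
    · simp [hcycle, ← hconst l, hi, eq_neg_of_add_eq_zero_right (hedges l).1]
    · have hzero : alternatingCycle a b (i, b l) = 0 := by simp [hcycle, hi, hi']
      simp [hzero, hsupp _ hzero]
  · have hzero := alternatingCycle_apply_of_notMem_range a i hj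
    simp [hzero, hsupp _ hzero]

lemma inGraver_alternatingCycle {a : Fin (n + 2) → Fin t} {b : Fin (n + 2) → Fin r}
    (ha : Injective a) (hb : Injective b) : inGraver (incidence t r) (alternatingCycle a b) := by
  refine inGraver_of_forall_eq_smul (e := (a 0, b 0)) (incidence_mulVec_alternatingCycle a b) ?_
    fun y hy hsupp => eq_smul_alternatingCycle ha hb hy hsupp
  rw [alternatingCycle_apply_snd a hb, Pi.single_eq_same, Pi.single_eq_of_ne (ha.ne (by simp)),
    sub_zero]

end Incidence

section FreshVertex

variable {n t r : ℕ} {ι X : Type*} [DecidableEq ι] {f : ι → X} {x : X}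

lemma eq_update_self_iff_of_notMem_range (hx : x ∉ Set.range f) (i j : ι) :
    x = update f i x j ↔ j = i := by
  rw [update_apply]
  split_ifs with hj
  · simp [hj]
  · exact iff_of_false (fun h => hx ⟨j, h.symm⟩) hj

lemma notMem_range_update (hf : Injective f) (hx : x ∉ Set.range f) (i : ι) :
    f i ∉ Set.range (update f i x) := by
  rintro ⟨j, hj⟩
  by_cases hji : j = i
  · rw [hji, update_self] at hj
    exact hx ⟨i, hj.symm⟩
  · rw [update_of_ne hji] at hj
    exact hji (hf hj)

lemma update_injective_of_notMem_range (hf : Injective f) (hx : x ∉ Set.range f) (i : ι) :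
    Injective (update f i x) := by
  intro j k hjk
  by_cases hj : j = i
  · subst hj
    rw [update_self, eq_update_self_iff_of_notMem_range hx] at hjk
    exact hjk.symm
  by_cases hk : k = i
  · subst hk
    rwa [update_self, eq_comm, eq_update_self_iff_of_notMem_range hx] at hjk
  · rw [update_of_ne hj, update_of_ne hk] at hjk
    exact hf hjk

variable {α β : Type*} [DecidableEq α] [DecidableEq β]

lemma alternatingCycle_update_right_apply {a : Fin (n + 1) → α} (ha : Injective a)
    {b : Fin (n + 1) → β} {y : β} (hy : y ∉ Set.range b) (l m : Fin n) :
    alternatingCycle a (update b m.succ y) (a l.succ, y) =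
      (if l = m then 1 else 0) - if l.castSucc = m.succ then 1 else 0 := by
  rw [← Fin.coeSucc_eq_succ (a := l), alternatingCycle_apply_fst ha, Fin.coeSucc_eq_succ]
  simp [Pi.single_apply, eq_update_self_iff_of_notMem_range hy]

lemma alternatingCycle_update_left_apply {a : Fin (n + 1) → α} {x : α} (hx : x ∉ Set.range a)
    {b : Fin (n + 1) → β} (hb : Injective b) (l m : Fin n) :
    alternatingCycle (update a m.succ x) b (x, b l.castSucc) =
      (if l.castSucc = m.succ then 1 else 0) - if l = m then 1 else 0 := by
  rw [alternatingCycle_apply_snd _ hb, Fin.coeSucc_eq_succ]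
  simp [Pi.single_apply, eq_update_self_iff_of_notMem_range hx]

lemma castSucc_ne_succ_of_lt {l m : Fin n} (h : l < m) : l.castSucc ≠ m.succ :=
  (Fin.castSucc_lt_succ.trans (Fin.succ_lt_succ_iff.2 h)).ne

lemma linearIndependent_neg_alternatingCycle_update_right {a : Fin (n + 1) → α}
    (ha : Injective a) {b : Fin (n + 1) → β} {y : β} (hy : y ∉ Set.range b) :
    LinearIndependent ℤ
      fun m : Fin n => (-alternatingCycle a (update b m.succ y)) ∘ fun i => (i, y) := by
  refine linearIndependent_of_triangular (fun m => a m.succ) (fun m => ?_) fun l m hlm => ?_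
  · simp [alternatingCycle_update_right_apply ha hy, Fin.castSucc_lt_succ.ne]
  · simp [alternatingCycle_update_right_apply ha hy, hlm.ne, castSucc_ne_succ_of_lt hlm]

lemma alternatingCycle_update_zero_right (a : Fin (n + 1) → α) (b : Fin (n + 1) → β) (y : β) :
    alternatingCycle a (update b 0 y) =
      n • alternatingCycle a b + ∑ m : Fin n, -alternatingCycle a (update b m.succ y) := by
  rw [← sum_alternatingCycle_update_right a b y, Fin.sum_univ_succ]
  simp

/-- The vectors that rewrite a lengthened cycle through a fresh row vertex `x` in terms of
`alternatingCycle a b`: a 4-cycle through `x` and `y`, followed by the negated cycles in which `x`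
replaces one of the row vertices other than `a 0`. -/
def freshRowCycles (a : Fin (n + 1) → α) (b : Fin (n + 1) → β) (x : α) (y : β) :
    Fin (n + 1) → α × β → ℤ :=
  Fin.cons (alternatingCycle ![x, a 0] ![b (Fin.last n), y])
    fun m : Fin n => -alternatingCycle (update a m.succ x) b

lemma alternatingCycle_snoc_update_zero (a : Fin (n + 1) → α) (b : Fin (n + 1) → β) (x : α)
    (y : β) :
    alternatingCycle (Fin.snoc (update a 0 x) (a 0) : Fin (n + 2) → α)
        (Fin.snoc b y : Fin (n + 2) → β) =
      n • alternatingCycle a b + ∑ m, freshRowCycles a b x y m := by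
  rw [alternatingCycle_snoc, ← sum_alternatingCycle_update_left a b x, Fin.sum_univ_succ,
    Fin.sum_univ_succ]
  simp only [freshRowCycles, Fin.cons_zero, Fin.cons_succ, update_self, sum_neg_distrib]
  abel

lemma linearIndependent_freshRowCycles {a : Fin (n + 1) → α} {x : α} (hx : x ∉ Set.range a)
    {b : Fin (n + 1) → β} (hb : Injective b) {y : β} (hy : y ∉ Set.range b) :
    LinearIndependent ℤ fun m => freshRowCycles a b x y m ∘ Prod.mk x := by
  refine linearIndependent_of_triangular (Fin.cons y fun m : Fin n => b m.castSucc)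
    (fun m => ?_) fun l m hlm => ?_
  · cases m using Fin.cases with
    | zero =>
      have ha0 : a 0 ≠ x := fun h => hx ⟨0, h⟩
      have hlast : b (Fin.last n) ≠ y := fun h => hy ⟨_, h⟩
      simp [freshRowCycles, alternatingCycle, ha0.symm, hlast.symm]
    | succ m =>
      simp [freshRowCycles, alternatingCycle_update_left_apply hx hb, Fin.castSucc_lt_succ.ne]
  · cases m using Fin.cases with
    | zero => exact absurd hlm (Fin.not_lt_zero _)
    | succ m =>
      cases l using Fin.cases with
      | zero => simp [freshRowCycles, alternatingCycle_apply_of_notMem_range _ _ hy]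
      | succ l =>
        have hlm' : l < m := Fin.succ_lt_succ_iff.1 hlm
        simp [freshRowCycles, alternatingCycle_update_left_apply hx hb, hlm'.ne,
          castSucc_ne_succ_of_lt hlm']

lemma inGraver_freshRowCycles {a : Fin (n + 2) → Fin t} (ha : Injective a) {x : Fin t}
    (hx : x ∉ Set.range a) {b : Fin (n + 2) → Fin r} (hb : Injective b) {y : Fin r}
    (hy : y ∉ Set.range b) (m : Fin (n + 2)) :
    inGraver (incidence t r) (freshRowCycles a b x y m) := by
  cases m using Fin.cases with
  | zero =>
    have hxa : x ≠ a 0 := fun h => hx ⟨0, h.symm⟩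
    have hby : b (Fin.last (n + 1)) ≠ y := fun h => hy ⟨_, h⟩
    exact inGraver_alternatingCycle (by simp [hxa]) (by simp [hby])
  | succ m =>
    exact (inGraver_alternatingCycle (update_injective_of_notMem_range ha hx m.succ) hb).neg

end FreshVertex

section CycleRepresentation

variable {n t r M : ℕ}

/-- Some cycle of length `2 * (n + 2)` in `K_{t,r}` is a nonnegative integer combination, with
coefficients summing to `M`, of linearly independent elements of the Graver basis. -/
def HasCycleRep (n t r M : ℕ) : Prop :=
  ∃ (a : Fin (n + 2) → Fin t) (b : Fin (n + 2) → Fin r), Injective a ∧ Injective b ∧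
    HasGraverRep (incidence t r) (alternatingCycle a b) M

theorem HasCycleRep.succ_le_graverComplexity (h : HasCycleRep n t r M) :
    ((M + 1 : ℕ) : ℕ∞) ≤ graverComplexity (incidence t r) := by
  obtain ⟨a, b, ha, hb, hrep⟩ := h
  exact hrep.succ_le_graverComplexity (inGraver_alternatingCycle ha hb)

theorem hasCycleRep_three_three : HasCycleRep 1 3 3 7 := by
  let c : Fin 4 → Fin 3 × Fin 3 → ℤ := ![alternatingCycle id ![2, 1, 0],
    alternatingCycle id ![1, 0, 2], alternatingCycle id ![1, 2, 0],
    alternatingCycle ![0, 1] ![0, 1]]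
  refine ⟨id, id, injective_id, injective_id, Fin 4, inferInstance, c, ![1, 2, 1, 3],
    ?_, ?_, by decide, by decide⟩
  · intro i
    fin_cases i <;> exact inGraver_alternatingCycle (by decide) (by decide)
  · exact linearIndependent_of_triangular ![(2, 1), (0, 2), (1, 2), (0, 0)] (by decide) (by decide)

theorem HasCycleRep.add_column (h : HasCycleRep n t r M) :
    HasCycleRep n t (r + 1) ((n + 1) * M + (n + 1)) := by
  obtain ⟨a, b, ha, hb, hrep⟩ := h
  have hι : Injective (Fin.castSucc : Fin r → Fin (r + 1)) := Fin.castSucc_injective r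
  let y := Fin.last r
  let b' : Fin (n + 2) → Fin (r + 1) := Fin.castSucc ∘ b
  have hy : y ∉ Set.range b' := by simp [b', y, Fin.castSucc_ne_last]
  have hupd := update_injective_of_notMem_range (hι.comp hb) hy
  refine ⟨a, update b' 0 y, ha, hupd 0, ?_⟩
  convert hrep.extend_zero_add (injective_id.prodMap hι)
    (incidence_mulVec_extend_zero_eq_zero_iff injective_id hι) (n + 1)
    (d := fun m : Fin (n + 1) => -alternatingCycle a (update b' m.succ y)) (ψ := fun i => (i, y))
    (fun m => (inGraver_alternatingCycle ha (hupd m.succ)).neg) (by simp [y])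
    (linearIndependent_neg_alternatingCycle_update_right ha hy) using 1
  · rw [extend_zero_alternatingCycle injective_id hι, id_comp, alternatingCycle_update_zero_right]
  · simp

theorem HasCycleRep.add_row (hr : n + 2 < r) (h : HasCycleRep n t r M) :
    HasCycleRep (n + 1) (t + 1) r ((n + 1) * M + (n + 2)) := by
  obtain ⟨a, b, ha, hb, hrep⟩ := h
  obtain ⟨y, hy⟩ : ∃ y, y ∉ Set.range b := by
    by_contra! hsurj
    exact hr.not_ge (by simpa using Fintype.card_le_of_surjective b hsurj)
  have hι : Injective (Fin.castSucc : Fin t → Fin (t + 1)) := Fin.castSucc_injective t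
  let x := Fin.last t
  let a' : Fin (n + 2) → Fin (t + 1) := Fin.castSucc ∘ a
  have hx : x ∉ Set.range a' := by simp [a', x, Fin.castSucc_ne_last]
  have hsnoc := Fin.snoc_injective_iff.2
    ⟨update_injective_of_notMem_range (hι.comp ha) hx 0, notMem_range_update (hι.comp ha) hx 0⟩
  refine ⟨Fin.snoc (update a' 0 x) (a' 0), Fin.snoc b y, hsnoc,
    Fin.snoc_injective_iff.2 ⟨hb, hy⟩, ?_⟩
  convert hrep.extend_zero_add (hι.prodMap injective_id)
    (incidence_mulVec_extend_zero_eq_zero_iff hι injective_id) (n + 1) (ψ := Prod.mk x)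
    (inGraver_freshRowCycles (hι.comp ha) hx hb hy) (by simp [x])
    (linearIndependent_freshRowCycles hx hb hy) using 1
  · rw [extend_zero_alternatingCycle hι injective_id, id_comp, alternatingCycle_snoc_update_zero]
  · simp

end CycleRepresentation

section LowerBound

lemma bConst_succ (n : ℕ) : bConst (n + 5) = (n + 3) * bConst (n + 4) + (n + 5) := by
  simp only [bConst, Nat.reduceSubDiff]
  rw [sum_Icc_succ_top (by lia), Nat.factorial_succ (n + 2)]
  push_cast
  field_simp
  ring

theorem exists_hasCycleRep_bConst_le (n : ℕ) :
    ∃ M : ℕ, HasCycleRep (n + 2) (n + 4) (n + 4) M ∧ bConst (n + 4) ≤ M + 1 := by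
  induction n with
  | zero => exact ⟨_, hasCycleRep_three_three.add_column.add_row (by lia), by norm_num [bConst]⟩
  | succ n ih =>
    obtain ⟨M, hM, hbM⟩ := ih
    refine ⟨_, hM.add_column.add_row (by lia), ?_⟩
    push_cast
    calc bConst (n + 5) = (n + 3) * bConst (n + 4) + (n + 5) := bConst_succ n
      _ ≤ (n + 3) * (M + 1) + (n + 5) := by gcongr
      _ ≤ (n + 3) * ((n + 3) * (M + 1)) + (n + 5) := by
        gcongr
        exact le_mul_of_one_le_left (by positivity) (by linarith [n.cast_nonneg (α := ℚ)])
      _ = (n + 2 + 1) * ((n + 2 + 1) * M + (n + 2 + 1)) + (n + 2 + 2) + 1 := by ring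

theorem HasCycleRep.add_columns {n t r M : ℕ} [NeZero n] (h : HasCycleRep n t r M) (k : ℕ) :
    ∃ M' : ℕ, HasCycleRep n t (r + k) M' ∧
      (M' + 1 + 1 / n : ℚ) = (n + 1) ^ k * (M + 1 + 1 / n) := by
  induction k with
  | zero => exact ⟨M, h, by simp⟩
  | succ k ih =>
    obtain ⟨M', hM', hk⟩ := ih
    refine ⟨_, hM'.add_column, ?_⟩
    rw [pow_succ', mul_assoc, ← hk]
    push_cast
    have hn : (n : ℚ) ≠ 0 := NeZero.ne _
    field_simp
    ring

end LowerBound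

theorem main_theorem (t r : ℕ) (ht : 4 ≤ t) (htr : t ≤ r) :
    ∃ m : ℕ, (m : ℕ∞) ≤ graverComplexity (incidence t r) ∧
      ((t : ℚ) - 1) ^ (r - t) * (bConst t + 1 / ((t : ℚ) - 2)) - 1 / ((t : ℚ) - 2) ≤ (m : ℚ) := by
  obtain ⟨n, rfl⟩ := Nat.exists_eq_add_of_le' ht
  obtain ⟨k, rfl⟩ := Nat.exists_eq_add_of_le htr
  obtain ⟨M, hM, hbM⟩ := exists_hasCycleRep_bConst_le n
  obtain ⟨M', hM', hMM'⟩ := hM.add_columns k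
  refine ⟨M' + 1, hM'.succ_le_graverComplexity, ?_⟩
  have hsub_two : ((n + 4 : ℕ) : ℚ) - 2 = (n + 2 : ℕ) := by push_cast; ring
  have hsub_one : ((n + 4 : ℕ) : ℚ) - 1 = (n + 2 : ℕ) + 1 := by push_cast; ring
  rw [hsub_one, hsub_two, Nat.add_sub_cancel_left, sub_le_iff_le_add, Nat.cast_succ M', hMM']
  gcongr
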